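/- Let N ≥ 2 be an integer and p, q real numbers with p > 1 and q > p − 1. There exists a constant c = c(N,p,q) > 0 such that for every nonempty proper open subset Ω of ℝ^N and every strong solution u of (E) on Ω, one has |∇u(x)| ≤ c · dist(x, Ωᶜ)^{−1/(q+1−p)} for every x ∈ Ω. -/

import Mathlib

open Metric Set Filter Topology MeasureTheory

/-- The vector field `x ↦ |∇u(x)|^{p-2} ∇u(x)`. -/
noncomputable def pGradField {N : ℕ} (p : ℝ) (u : EuclideanSpace ℝ (Fin N) → ℝ)
    (x : EuclideanSpace ℝ (Fin N)) : EuclideanSpace ℝ (Fin N) :=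
  ‖gradient u x‖ ^ (p - 2) • gradient u x

/-- A strong solution of `(E) : -Δ_p u + |∇u|^q = 0` on an open set `G ⊆ ℝ^N`. -/
def IsStrongSolution {N : ℕ} (p q : ℝ) (G : Set (EuclideanSpace ℝ (Fin N)))
    (u : EuclideanSpace ℝ (Fin N) → ℝ) : Prop :=
  ContDiffOn ℝ 1 u G ∧
  ContDiffOn ℝ 3 u {x | x ∈ G ∧ gradient u x ≠ 0} ∧
  ∀ x ∈ G, DifferentiableAt ℝ (pGradField p u) x ∧
    LinearMap.trace ℝ (EuclideanSpace ℝ (Fin N))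
      (fderiv ℝ (pGradField p u) x : EuclideanSpace ℝ (Fin N) →ₗ[ℝ] EuclideanSpace ℝ (Fin N))
      = ‖gradient u x‖ ^ q


/-!
The estimate is proved by Bernstein's method. Put `k = q + 1 - p` and let `x` maximize
`|∇u|^k (R² - |x - z|²)` over a ball of radius `R` around `z` contained in `Ω`. The first-order
condition at `x` says that `D²u ∇u` is a multiple of `x - z`. In the second-order condition,
traced against the matrix `A = 1 + (p - 2) ∇u ⊗ ∇u / |∇u|²` of the `p`-Laplacian, the third
derivatives are eliminated by differentiating the equation `tr (A D²u) = |∇u|^(k + 1)` along `∇u`.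
What remains is the good term `|D²u A^(1/2)|²`, which by Cauchy–Schwarz is at least
`tr (A D²u)² / tr A = |∇u|^(2k + 2) / tr A`. Hence `Y = |∇u|^k (R² - |x - z|²)` satisfies at `x` a
quadratic inequality that forces `Y ≤ C R`, and comparison with the value at `z` gives
`|∇u(z)|^k ≤ C / R`.
-/

open Module
open scoped Gradient RealInnerProductSpace

section RealAnalysis

theorem le_max_one_mul_of_quadratic_le {α β γ R Y : ℝ} (hα : 0 < α) (hγ : 0 ≤ γ) (hR : 0 < R)
    (h : α * Y ^ 2 ≤ β * R * Y + γ * R ^ 2) : Y ≤ max 1 ((β + γ) / α) * R := by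
  rcases le_or_gt Y R with hYR | hRY
  · exact hYR.trans (le_mul_of_one_le_left hR.le (le_max_left _ _))
  · have hY : 0 < Y := hR.trans hRY
    have hγR : γ * R * R ≤ γ * R * Y := by gcongr
    have hlin : α * Y ≤ (β + γ) * R := le_of_mul_le_mul_right (by linarith) hY
    have hdiv : Y ≤ (β + γ) / α * R := by rw [div_mul_eq_mul_div, le_div_iff₀' hα]; exact hlin
    exact hdiv.trans (mul_le_mul_of_nonneg_right (le_max_right _ _) hR.le)

theorem le_mul_rpow_of_rpow_mul_le {a d k C : ℝ} (ha : 0 ≤ a) (hd : 0 < d) (hk : 0 < k)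
    (hC : 0 ≤ C) (h : a ^ k * d ≤ C) : a ≤ C ^ (1 / k) * d ^ (-(1 / k)) := by
  rw [Real.rpow_neg hd.le, ← div_eq_mul_inv, ← Real.div_rpow hC hd.le, one_div,
    Real.le_rpow_inv_iff_of_pos ha (by positivity) hk]
  exact (le_div_iff₀ hd).2 h

theorem deriv_second_nonpos_of_isLocalMax {f f' : ℝ → ℝ} {f'' t : ℝ}
    (hf : ∀ᶠ s in 𝓝 t, HasDerivAt f (f' s) s) (hf' : HasDerivAt f' f'' t)
    (hmax : IsLocalMax f t) : f'' ≤ 0 := by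
  by_contra! hpos
  have hderiv : deriv f =ᶠ[𝓝 t] f' := hf.mono fun s hs => hs.deriv
  have hderiv2 : deriv (deriv f) t = f'' := by rw [hderiv.deriv_eq, hf'.deriv]
  have hmin : IsLocalMin f t := isLocalMin_of_deriv_deriv_pos (hderiv2 ▸ hpos)
    hmax.deriv_eq_zero hf.self_of_nhds.continuousAt
  have hconst : f =ᶠ[𝓝 t] fun _ => f t := by
    filter_upwards [hmax, hmin] with s hle hge using le_antisymm hle hge
  have hzero : deriv (deriv f) t = 0 := by rw [hconst.deriv.deriv_eq]; simp
  exact hpos.ne' (hderiv2 ▸ hzero)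

/-- The derivative tests at `t` for the logarithm `m log V + log Φ`. -/
theorem derivative_tests_of_isLocalMax_rpow_mul {V V' Φ Φ' : ℝ → ℝ} {V'' Φ'' m t : ℝ}
    (hV : ∀ᶠ s in 𝓝 t, HasDerivAt V (V' s) s) (hV' : HasDerivAt V' V'' t)
    (hΦ : ∀ᶠ s in 𝓝 t, HasDerivAt Φ (Φ' s) s) (hΦ' : HasDerivAt Φ' Φ'' t)
    (hVt : 0 < V t) (hΦt : 0 < Φ t) (hmax : IsLocalMax (fun s => V s ^ m * Φ s) t) :
    m * (V' t / V t) + Φ' t / Φ t = 0 ∧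
      m * (V'' / V t - (V' t / V t) ^ 2) + (Φ'' / Φ t - (Φ' t / Φ t) ^ 2) ≤ 0 := by
  have hVpos : ∀ᶠ s in 𝓝 t, 0 < V s :=
    hV.self_of_nhds.continuousAt.eventually (lt_mem_nhds hVt)
  have hΦpos : ∀ᶠ s in 𝓝 t, 0 < Φ s :=
    hΦ.self_of_nhds.continuousAt.eventually (lt_mem_nhds hΦt)
  have hlog : ∀ s, 0 < V s → 0 < Φ s →
      Real.log (V s ^ m * Φ s) = m * Real.log (V s) + Real.log (Φ s) := fun s hVs hΦs => by
    rw [Real.log_mul (Real.rpow_pos_of_pos hVs m).ne' hΦs.ne', Real.log_rpow hVs]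
  have hlogmax : IsLocalMax (fun s => m * Real.log (V s) + Real.log (Φ s)) t := by
    filter_upwards [hmax, hVpos, hΦpos] with s hs hVs hΦs
    rw [← hlog s hVs hΦs, ← hlog t hVt hΦt]
    exact Real.log_le_log (by positivity) hs
  have hfirst : ∀ᶠ s in 𝓝 t, HasDerivAt (fun s => m * Real.log (V s) + Real.log (Φ s))
      (m * (V' s / V s) + Φ' s / Φ s) s := by
    filter_upwards [hV, hΦ, hVpos, hΦpos] with s hVs hΦs hV0 hΦ0
    exact ((hVs.log hV0.ne').const_mul m).add (hΦs.log hΦ0.ne')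
  have hsecond : HasDerivAt (fun s => m * (V' s / V s) + Φ' s / Φ s)
      (m * (V'' / V t - (V' t / V t) ^ 2) + (Φ'' / Φ t - (Φ' t / Φ t) ^ 2)) t := by
    refine (((hV'.fun_div hV.self_of_nhds hVt.ne').const_mul m).fun_add
      (hΦ'.fun_div hΦ.self_of_nhds hΦt.ne')).congr_deriv ?_
    field_simp
  exact ⟨hlogmax.hasDerivAt_eq_zero hfirst.self_of_nhds,
    deriv_second_nonpos_of_isLocalMax hfirst hsecond hlogmax⟩

end RealAnalysis

section InnerProductSpace

variable {E : Type*} [NormedAddCommGroup E] [InnerProductSpace ℝ E]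

theorem sq_sum_inner_le {ι : Type*} (s : Finset ι) (a b : ι → E) :
    (∑ i ∈ s, ⟪a i, b i⟫) ^ 2 ≤ (∑ i ∈ s, ‖a i‖ ^ 2) * ∑ i ∈ s, ‖b i‖ ^ 2 := by
  have habs : |∑ i ∈ s, ⟪a i, b i⟫| ≤ ∑ i ∈ s, ‖a i‖ * ‖b i‖ :=
    (Finset.abs_sum_le_sum_abs _ _).trans
      (Finset.sum_le_sum fun i _ => abs_real_inner_le_norm (a i) (b i))
  calc (∑ i ∈ s, ⟪a i, b i⟫) ^ 2 ≤ (∑ i ∈ s, ‖a i‖ * ‖b i‖) ^ 2 :=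
        sq_le_sq' (neg_le_of_abs_le habs) (le_of_abs_le habs)
    _ ≤ _ := Finset.sum_mul_sq_le_sq_mul_sq _ _ _

theorem sum_sq_inner_le {ι : Type*} (s : Finset ι) (y : E) (a : ι → E) :
    ∑ i ∈ s, ⟪y, a i⟫ ^ 2 ≤ ‖y‖ ^ 2 * ∑ i ∈ s, ‖a i‖ ^ 2 := by
  rw [Finset.mul_sum]
  refine Finset.sum_le_sum fun i _ => ?_
  rw [← mul_pow, ← sq_abs]
  gcongr
  exact abs_real_inner_le_norm _ _

theorem hasDerivAt_comp_line {F : Type*} [NormedAddCommGroup F] [NormedSpace ℝ F] {f : E → F}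
    {f' : E →L[ℝ] F} {x a : E} {t : ℝ} (hf : HasFDerivAt f f' (x + t • a)) :
    HasDerivAt (fun s : ℝ => f (x + s • a)) (f' a) t := by
  have hline : HasDerivAt (fun s : ℝ => x + s • a) a t := by
    simpa using ((hasDerivAt_id t).smul_const a).const_add x
  exact hf.comp_hasDerivAt t hline

theorem tendsto_line (x a : E) : Tendsto (fun t : ℝ => x + t • a) (𝓝 0) (𝓝 x) :=
  Continuous.tendsto' (by fun_prop) _ _ (by simp)

theorem hasFDerivAt_norm_rpow_of_ne_zero {F : Type*} [NormedAddCommGroup F] [NormedSpace ℝ F]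
    {g : F → E} {g' : F →L[ℝ] E} {x : F} (hg : HasFDerivAt g g' x) (hx : g x ≠ 0) (r : ℝ) :
    HasFDerivAt (fun y => ‖g y‖ ^ r) ((r * ‖g x‖ ^ (r - 2)) • (innerSL ℝ (g x) ∘L g')) x := by
  have hnorm : 0 < ‖g x‖ := norm_pos_iff.2 hx
  have hsq : (fun y => ‖g y‖ ^ r) = fun y => (‖g y‖ ^ 2) ^ (r / 2) := by
    ext y
    rw [← Real.rpow_natCast_mul (norm_nonneg _), Nat.cast_ofNat, mul_div_cancel₀ r two_ne_zero]
  rw [hsq]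
  refine (hg.norm_sq.rpow_const (Or.inl (by positivity))).congr_fderiv ?_
  rw [← Real.rpow_natCast_mul hnorm.le, ← Nat.cast_smul_eq_nsmul ℝ, smul_smul]
  congr 1
  push_cast
  ring_nf

end InnerProductSpace

section Hessian

variable {E : Type*} [NormedAddCommGroup E] [InnerProductSpace ℝ E] [CompleteSpace E]
  {u : E → ℝ} {x : E}

/-- The Hessian of `u` at `x`, as the endomorphism `D(∇u)(x)`. Its `fderiv` in turn encodes the
third derivatives: `⟪fderiv ℝ (hessian u) x a b, c⟫ = D³u(x)(a, b, c)`. -/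
noncomputable def hessian (u : E → ℝ) (x : E) : E →L[ℝ] E :=
  fderiv ℝ (∇ u) x

theorem gradient_eq_toDual_symm_comp_fderiv (u : E → ℝ) :
    ∇ u = (show StrongDual ℝ E ≃ₗᵢ[ℝ] E from (InnerProductSpace.toDual ℝ E).symm) ∘ fderiv ℝ u :=
  rfl

theorem contDiffAt_gradient {m n : WithTop ℕ∞} (hu : ContDiffAt ℝ n u x) (hmn : m + 1 ≤ n) :
    ContDiffAt ℝ m (∇ u) x := by
  rw [gradient_eq_toDual_symm_comp_fderiv]
  exact (LinearIsometryEquiv.contDiff _).contDiffAt.comp x (hu.fderiv_right hmn)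

theorem continuousOn_gradient {G : Set E} (hu : ContDiffOn ℝ 1 u G) (hG : IsOpen G) :
    ContinuousOn (∇ u) G := by
  rw [gradient_eq_toDual_symm_comp_fderiv]
  exact (LinearIsometryEquiv.continuous _).comp_continuousOn
    (hu.continuousOn_fderiv_of_isOpen hG le_rfl)

theorem hasFDerivAt_gradient (hu : ContDiffAt ℝ 2 u x) : HasFDerivAt (∇ u) (hessian u x) x :=
  ((contDiffAt_gradient hu one_add_one_eq_two.le).differentiableAt one_ne_zero).hasFDerivAt

theorem hasFDerivAt_hessian (hu : ContDiffAt ℝ 3 u x) :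
    HasFDerivAt (hessian u) (fderiv ℝ (hessian u) x) x :=
  (((contDiffAt_gradient hu two_add_one_eq_three.le).fderiv_right
    one_add_one_eq_two.le).differentiableAt one_ne_zero).hasFDerivAt

theorem inner_hessian_comm (hu : ContDiffAt ℝ 2 u x) (a b : E) :
    ⟪hessian u x a, b⟫ = ⟪hessian u x b, a⟫ := by
  have hfderiv : fderiv ℝ u = fun y => innerSL ℝ (∇ u y) := by
    ext y b
    exact (inner_gradient_left).symm
  have hsnd : fderiv ℝ (fderiv ℝ u) x = innerSL ℝ ∘L hessian u x := by
    rw [hfderiv]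
    exact ((innerSL ℝ).hasFDerivAt.comp x (hasFDerivAt_gradient hu)).fderiv
  have hsymm := hu.isSymmSndFDerivAt (by simp) a b
  rw [hsnd] at hsymm
  exact hsymm

theorem inner_fderiv_hessian_comm (hu : ContDiffAt ℝ 3 u x) (a b c : E) :
    ⟪fderiv ℝ (hessian u) x a b, c⟫ = ⟪fderiv ℝ (hessian u) x c b, a⟫ := by
  have hu2 : ∀ᶠ y in 𝓝 x, ContDiffAt ℝ 2 u y :=
    (hu.of_le (by norm_num)).eventually (by simp)
  have hswap : ∀ v w, fderiv ℝ (hessian u) x v w = fderiv ℝ (hessian u) x w v :=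
    second_derivative_symmetric_of_eventually (hu2.mono fun y hy => hasFDerivAt_gradient hy)
      (hasFDerivAt_hessian hu)
  have hadj : ∀ d v w, ⟪fderiv ℝ (hessian u) x d v, w⟫ = ⟪fderiv ℝ (hessian u) x d w, v⟫ := by
    intro d v w
    have hderiv : ∀ v w, HasFDerivAt (fun y => ⟪hessian u y v, w⟫)
        (innerSL ℝ w ∘L (fderiv ℝ (hessian u) x).flip v) x := fun v w => by
      simp_rw [real_inner_comm w]
      exact (innerSL ℝ w).hasFDerivAt.comp x
        ((ContinuousLinearMap.apply ℝ E v).hasFDerivAt.comp x (hasFDerivAt_hessian hu))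
    have heq : (fun y => ⟪hessian u y v, w⟫) =ᶠ[𝓝 x] fun y => ⟪hessian u y w, v⟫ :=
      hu2.mono fun y hy => inner_hessian_comm hy v w
    simpa [real_inner_comm] using
      DFunLike.congr_fun ((hderiv v w).unique ((hderiv w v).congr_of_eventuallyEq heq)) d
  rw [hswap a b, hadj b a c, hswap b c]

end Hessian

section PTrace

variable {E : Type*} [NormedAddCommGroup E] [InnerProductSpace ℝ E] [FiniteDimensional ℝ E]

/-- The nondivergence form of the `p`-Laplacian: `|∇u|^{p-2} · pTrace p (∇u) (hessian u) = Δ_p u`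
wherever `∇u ≠ 0`. At `g = 0` the second summand is `0`. -/
noncomputable def pTrace (p : ℝ) (g : E) (B : E →L[ℝ] E) : ℝ :=
  LinearMap.trace ℝ E B + (p - 2) * ⟪B g, g⟫ / ‖g‖ ^ 2

/-- The value of `pTrace p g` at the identity for `g ≠ 0`: the trace of the matrix
`1 + (p - 2) g ⊗ g / |g|²`. -/
noncomputable def pDim (E : Type*) [NormedAddCommGroup E] [InnerProductSpace ℝ E] (p : ℝ) : ℝ :=
  finrank ℝ E + (p - 2)

theorem pDim_nonneg [Nontrivial E] {p : ℝ} (hp : 1 ≤ p) : 0 ≤ pDim E p := by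
  have hdim : (1 : ℝ) ≤ finrank ℝ E := by exact_mod_cast finrank_pos (R := ℝ) (M := E)
  rw [pDim]
  linarith

theorem pTrace_id {p : ℝ} {g : E} (hg : g ≠ 0) :
    pTrace p g (ContinuousLinearMap.id ℝ E) = pDim E p := by
  have hnorm : ‖g‖ ^ 2 ≠ 0 := by positivity
  simp [pTrace, pDim, hnorm]

/-- The `a i` are the columns of the square root of `1 + (p - 2) g ⊗ g / |g|²`. -/
theorem exists_pTrace_eq_sum_inner {p : ℝ} (hp : 1 ≤ p) {g : E} (hg : g ≠ 0) :
    ∃ a : Fin (finrank ℝ E) → E, ∀ B : E →L[ℝ] E, pTrace p g B = ∑ i, ⟪B (a i), a i⟫ := by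
  let e := stdOrthonormalBasis ℝ E
  let κ : ℝ := (√(p - 1) - 1) / ‖g‖ ^ 2
  have hκ : 2 * κ + κ ^ 2 * ‖g‖ ^ 2 = (p - 2) / ‖g‖ ^ 2 := by
    have hnorm : ‖g‖ ≠ 0 := norm_ne_zero_iff.2 hg
    have hsqrt : √(p - 1) ^ 2 = p - 1 := Real.sq_sqrt (by linarith)
    simp only [κ]
    field_simp
    linear_combination hsqrt
  refine ⟨fun i => e i + (κ * ⟪e i, g⟫) • g, fun B => ?_⟩
  have hBg : ∑ i, ⟪e i, g⟫ * ⟪B (e i), g⟫ = ⟪B g, g⟫ := by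
    conv_rhs => rw [← e.sum_repr' g, map_sum, sum_inner, e.sum_repr' g]
    simp only [map_smul, real_inner_smul_left]
  have hgB : ∑ i, ⟪e i, g⟫ * ⟪B g, e i⟫ = ⟪B g, g⟫ := by
    simp only [mul_comm ⟪e _, g⟫, e.sum_inner_mul_inner]
  have hgg : ∑ i, ⟪e i, g⟫ ^ 2 = ‖g‖ ^ 2 := e.sum_sq_inner_right g
  have hexpand : ∀ i, ⟪B (e i + (κ * ⟪e i, g⟫) • g), e i + (κ * ⟪e i, g⟫) • g⟫ =
      ⟪e i, B (e i)⟫ + κ * (⟪e i, g⟫ * ⟪B (e i), g⟫) + κ * (⟪e i, g⟫ * ⟪B g, e i⟫) +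
        κ ^ 2 * ⟪B g, g⟫ * ⟪e i, g⟫ ^ 2 := fun i => by
    simp only [map_add, map_smul, inner_add_left, inner_add_right, real_inner_smul_left,
      real_inner_smul_right, real_inner_comm (B (e i)) (e i)]
    ring
  simp only [hexpand, Finset.sum_add_distrib, ← Finset.mul_sum, hBg, hgB, hgg]
  rw [pTrace, LinearMap.trace_eq_sum_inner _ e]
  linear_combination -⟪B g, g⟫ * hκ

/-- The trace of the Fréchet derivative; it is `0` where `F` is not differentiable. -/
noncomputable def divergence (F : E → E) (x : E) : ℝ :=
  LinearMap.trace ℝ E (fderiv ℝ F x)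

theorem divergence_norm_rpow_smul {g : E → E} {H : E →L[ℝ] E} {x : E}
    (hg : HasFDerivAt g H x) (hx : g x ≠ 0) (p : ℝ) :
    divergence (fun y => ‖g y‖ ^ (p - 2) • g y) x = ‖g x‖ ^ (p - 2) * pTrace p (g x) H := by
  have hpow : ‖g x‖ ^ (p - 2 - 2) = ‖g x‖ ^ (p - 2) / ‖g x‖ ^ 2 :=
    Real.rpow_sub_natCast (norm_ne_zero_iff.2 hx) _ 2
  rw [divergence, ((hasFDerivAt_norm_rpow_of_ne_zero hg hx (p - 2)).fun_smul hg).fderiv, pTrace]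
  simp only [hpow, ContinuousLinearMap.toLinearMap_add, ContinuousLinearMap.toLinearMap_smul,
    ContinuousLinearMap.coe_smulRight, map_add, map_smul, smul_eq_mul, LinearMap.trace_smulRight,
    LinearMap.smul_apply, ContinuousLinearMap.coe_coe, ContinuousLinearMap.comp_apply,
    innerSL_apply_apply, real_inner_comm (H (g x))]
  ring

theorem hasDerivAt_pTrace {p t : ℝ} {γ : ℝ → E} {γ' : E} {B : ℝ → E →L[ℝ] E} {B' : E →L[ℝ] E}
    (hγ : HasDerivAt γ γ' t) (hB : HasDerivAt B B' t) (ht : γ t ≠ 0) :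
    HasDerivAt (fun s => pTrace p (γ s) (B s))
      (pTrace p (γ t) B' + (p - 2) * ((⟪B t γ', γ t⟫ + ⟪B t (γ t), γ'⟫) / ‖γ t‖ ^ 2 -
        2 * ⟪B t (γ t), γ t⟫ * ⟪γ t, γ'⟫ / ‖γ t‖ ^ 4)) t := by
  have hnorm : ‖γ t‖ ≠ 0 := norm_ne_zero_iff.2 ht
  have htrace : HasDerivAt (fun s => LinearMap.trace ℝ E (B s)) (LinearMap.trace ℝ E B') t :=
    ((LinearMap.trace ℝ E ∘ₗ ContinuousLinearMap.coeLM ℝ).toContinuousLinearMap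
      ).hasFDerivAt.comp_hasDerivAt t hB
  refine (htrace.fun_add ((((hB.clm_apply hγ).inner ℝ hγ).const_mul (p - 2)).fun_div hγ.norm_sq
    (pow_ne_zero 2 hnorm))).congr_deriv ?_
  rw [pTrace, inner_add_left]
  field_simp
  ring

theorem pTrace_fderiv_hessian_of_eventuallyEq {p s : ℝ} {u : E → ℝ} {x : E}
    (hu : ContDiffAt ℝ 3 u x) (hx : ∇ u x ≠ 0)
    (heq : ∀ᶠ y in 𝓝 x, pTrace p (∇ u y) (hessian u y) = ‖∇ u y‖ ^ s) :
    pTrace p (∇ u x) (fderiv ℝ (hessian u) x (∇ u x)) =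
      s * ‖∇ u x‖ ^ (s - 2) * ⟪hessian u x (∇ u x), ∇ u x⟫ -
        2 * (p - 2) * (‖hessian u x (∇ u x)‖ ^ 2 / ‖∇ u x‖ ^ 2 -
          ⟪hessian u x (∇ u x), ∇ u x⟫ ^ 2 / ‖∇ u x‖ ^ 4) := by
  have hu2 : ContDiffAt ℝ 2 u x := hu.of_le (by norm_num)
  have hgrad := hasFDerivAt_gradient hu2
  have hzero : x + (0 : ℝ) • ∇ u x = x := by simp
  have hgradline : HasDerivAt (fun t : ℝ => ∇ u (x + t • ∇ u x)) (hessian u x (∇ u x)) 0 :=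
    hasDerivAt_comp_line (by rwa [hzero])
  have hhessline : HasDerivAt (fun t : ℝ => hessian u (x + t • ∇ u x))
      (fderiv ℝ (hessian u) x (∇ u x)) 0 :=
    hasDerivAt_comp_line (by rw [hzero]; exact hasFDerivAt_hessian hu)
  have hpowline : HasDerivAt (fun t : ℝ => ‖∇ u (x + t • ∇ u x)‖ ^ s)
      (s * ‖∇ u x‖ ^ (s - 2) * ⟪∇ u x, hessian u x (∇ u x)⟫) 0 :=
    hasDerivAt_comp_line (by rw [hzero]; exact hasFDerivAt_norm_rpow_of_ne_zero hgrad hx s)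
  have hderiv := (hasDerivAt_pTrace (p := p) hgradline hhessline (by rwa [hzero])).unique
    (hpowline.congr_of_eventuallyEq ((tendsto_line x (∇ u x)).eventually heq))
  simp only [hzero] at hderiv
  have hcross : ⟪hessian u x (hessian u x (∇ u x)), ∇ u x⟫ = ‖hessian u x (∇ u x)‖ ^ 2 := by
    rw [inner_hessian_comm hu2, real_inner_self_eq_norm_sq]
  rw [hcross, real_inner_self_eq_norm_sq,
    real_inner_comm (hessian u x (∇ u x)) (∇ u x)] at hderiv
  linear_combination hderiv

end PTrace

section Bernstein

variable {E : Type*} [NormedAddCommGroup E] [InnerProductSpace ℝ E] [CompleteSpace E]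
  {u : E → ℝ} {x z : E} {k R : ℝ}

/-- Bernstein's auxiliary function on the ball of radius `R` around `z`: a power of the gradient
times a quadratic cut-off. -/
noncomputable def bernsteinFun (u : E → ℝ) (k R : ℝ) (z y : E) : ℝ :=
  ‖∇ u y‖ ^ k * (R ^ 2 - ‖y - z‖ ^ 2)

theorem derivative_tests_of_isLocalMax_bernsteinFun (hu : ContDiffAt ℝ 3 u x) (hx : ∇ u x ≠ 0)
    (hφ : 0 < R ^ 2 - ‖x - z‖ ^ 2) (hmax : IsLocalMax (bernsteinFun u k R z) x) (a : E) :
    k / 2 * (2 * ⟪∇ u x, hessian u x a⟫ / ‖∇ u x‖ ^ 2) +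
        -(2 * ⟪x - z, a⟫) / (R ^ 2 - ‖x - z‖ ^ 2) = 0 ∧
      k / 2 * (2 * (⟪∇ u x, fderiv ℝ (hessian u) x a a⟫ + ‖hessian u x a‖ ^ 2) / ‖∇ u x‖ ^ 2 -
          (2 * ⟪∇ u x, hessian u x a⟫ / ‖∇ u x‖ ^ 2) ^ 2) +
        (-(2 * ‖a‖ ^ 2) / (R ^ 2 - ‖x - z‖ ^ 2) -
          (-(2 * ⟪x - z, a⟫) / (R ^ 2 - ‖x - z‖ ^ 2)) ^ 2) ≤ 0 := by
  have hzero : x + (0 : ℝ) • a = x := by simp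
  have hgrad : ∀ᶠ y in 𝓝 x, HasFDerivAt (∇ u) (hessian u y) y :=
    ((hu.of_le (by norm_num)).eventually (by simp)).mono fun y hy => hasFDerivAt_gradient hy
  have hV : ∀ᶠ t in 𝓝 (0 : ℝ), HasDerivAt (fun t : ℝ => ‖∇ u (x + t • a)‖ ^ 2)
      (2 * ⟪∇ u (x + t • a), hessian u (x + t • a) a⟫) t :=
    ((tendsto_line x a).eventually hgrad).mono fun t ht => (hasDerivAt_comp_line ht).norm_sq
  have hhess : HasDerivAt (fun t : ℝ => hessian u (x + t • a)) (fderiv ℝ (hessian u) x a) 0 :=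
    hasDerivAt_comp_line (by rw [hzero]; exact hasFDerivAt_hessian hu)
  have hgradline : HasDerivAt (fun t : ℝ => ∇ u (x + t • a)) (hessian u x a) 0 :=
    hasDerivAt_comp_line (by rw [hzero]; exact hgrad.self_of_nhds)
  have hV' : HasDerivAt (fun t : ℝ => 2 * ⟪∇ u (x + t • a), hessian u (x + t • a) a⟫)
      (2 * (⟪∇ u x, fderiv ℝ (hessian u) x a a⟫ + ‖hessian u x a‖ ^ 2)) 0 := by
    simpa [hzero] using
      (hgradline.inner ℝ (hhess.clm_apply (hasDerivAt_const 0 a))).const_mul 2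
  have hline : ∀ t : ℝ, HasDerivAt (fun t : ℝ => x + t • a - z) a t := fun t =>
    (hasDerivAt_comp_line (hasFDerivAt_id _)).sub_const z
  have hΦ : ∀ t : ℝ, HasDerivAt (fun t : ℝ => R ^ 2 - ‖x + t • a - z‖ ^ 2)
      (-(2 * ⟪x + t • a - z, a⟫)) t := fun t => ((hline t).norm_sq).const_sub _
  have hΦ' : HasDerivAt (fun t : ℝ => -(2 * ⟪x + t • a - z, a⟫)) (-(2 * ‖a‖ ^ 2)) 0 := by
    simpa using (((hline 0).inner ℝ (hasDerivAt_const 0 a)).const_mul 2).fun_neg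
  have hmaxline : IsLocalMax (fun t : ℝ => (‖∇ u (x + t • a)‖ ^ 2) ^ (k / 2) *
      (R ^ 2 - ‖x + t • a - z‖ ^ 2)) 0 := by
    have hpow : ∀ y, (‖∇ u y‖ ^ 2) ^ (k / 2) * (R ^ 2 - ‖y - z‖ ^ 2) = bernsteinFun u k R z y :=
      fun y => by
        rw [bernsteinFun, ← Real.rpow_natCast_mul (norm_nonneg _), Nat.cast_ofNat,
          mul_div_cancel₀ k two_ne_zero]
    simp only [hpow]
    exact IsMaxFilter.comp_tendsto (by rwa [hzero]) (tendsto_line x a)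
  have htests := derivative_tests_of_isLocalMax_rpow_mul hV hV' (.of_forall hΦ) hΦ'
    (by rw [hzero]; positivity) (by rwa [hzero]) hmaxline
  simpa only [hzero] using htests

theorem hessian_gradient_of_isLocalMax_bernsteinFun (hk : 0 < k) (hu : ContDiffAt ℝ 3 u x)
    (hx : ∇ u x ≠ 0) (hφ : 0 < R ^ 2 - ‖x - z‖ ^ 2) (hmax : IsLocalMax (bernsteinFun u k R z) x) :
    hessian u x (∇ u x) = (2 * ‖∇ u x‖ ^ 2 / (k * (R ^ 2 - ‖x - z‖ ^ 2))) • (x - z) := by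
  have hnorm : ‖∇ u x‖ ≠ 0 := norm_ne_zero_iff.2 hx
  refine ext_inner_right ℝ fun a => ?_
  have htest := (derivative_tests_of_isLocalMax_bernsteinFun hu hx hφ hmax a).1
  rw [inner_hessian_comm (hu.of_le (by norm_num)), real_inner_comm, real_inner_smul_left]
  field_simp at htest ⊢
  linear_combination htest

theorem inner_fderiv_hessian_add_norm_sq_le_of_isLocalMax_bernsteinFun (hk : 0 < k)
    (hu : ContDiffAt ℝ 3 u x) (hx : ∇ u x ≠ 0) (hφ : 0 < R ^ 2 - ‖x - z‖ ^ 2)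
    (hmax : IsLocalMax (bernsteinFun u k R z) x) (a : E) :
    k * ((⟪fderiv ℝ (hessian u) x (∇ u x) a, a⟫ + ‖hessian u x a‖ ^ 2) / ‖∇ u x‖ ^ 2) ≤
      2 / (R ^ 2 - ‖x - z‖ ^ 2) * ‖a‖ ^ 2 +
        4 * (1 + 2 / k) / (R ^ 2 - ‖x - z‖ ^ 2) ^ 2 * ⟪x - z, a⟫ ^ 2 := by
  have hnorm : ‖∇ u x‖ ≠ 0 := norm_ne_zero_iff.2 hx
  obtain ⟨hfirst, hsecond⟩ := derivative_tests_of_isLocalMax_bernsteinFun hu hx hφ hmax a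
  have hlog : 2 * ⟪∇ u x, hessian u x a⟫ / ‖∇ u x‖ ^ 2 =
      4 * ⟪x - z, a⟫ / (k * (R ^ 2 - ‖x - z‖ ^ 2)) := by
    field_simp at hfirst ⊢
    linear_combination 2 * hfirst
  rw [hlog, real_inner_comm, inner_fderiv_hessian_comm hu] at hsecond
  refine sub_nonpos.1 (le_of_eq_of_le ?_ hsecond)
  field_simp
  ring

end Bernstein

section BernsteinBound

variable {E : Type*} [NormedAddCommGroup E] [InnerProductSpace ℝ E] [FiniteDimensional ℝ E]
  {u : E → ℝ} {x z : E} {p k R : ℝ}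

theorem pTrace_fderiv_hessian_add_pTrace_hessian_sq_le_of_isLocalMax_bernsteinFun (hp : 1 ≤ p)
    (hk : 0 < k) (hu : ContDiffAt ℝ 3 u x) (hx : ∇ u x ≠ 0) (hφ : 0 < R ^ 2 - ‖x - z‖ ^ 2)
    (hmax : IsLocalMax (bernsteinFun u k R z) x) :
    k * ((pDim E p * pTrace p (∇ u x) (fderiv ℝ (hessian u) x (∇ u x)) +
        pTrace p (∇ u x) (hessian u x) ^ 2) / ‖∇ u x‖ ^ 2) ≤
      pDim E p ^ 2 * (2 / (R ^ 2 - ‖x - z‖ ^ 2) +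
        4 * (1 + 2 / k) / (R ^ 2 - ‖x - z‖ ^ 2) ^ 2 * ‖x - z‖ ^ 2) := by
  obtain ⟨a, ha⟩ := exists_pTrace_eq_sum_inner hp hx
  have hdim : ∑ i, ‖a i‖ ^ 2 = pDim E p := by
    rw [← pTrace_id hx, ha]
    simp only [ContinuousLinearMap.id_apply, real_inner_self_eq_norm_sq]
  have hdim_nonneg : 0 ≤ pDim E p := hdim ▸ Finset.sum_nonneg fun i _ => sq_nonneg _
  have hcauchy : pTrace p (∇ u x) (hessian u x) ^ 2 ≤
      pDim E p * ∑ i, ‖hessian u x (a i)‖ ^ 2 := by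
    rw [ha, ← hdim, mul_comm]
    exact sq_sum_inner_le _ _ _
  have hradial : ∑ i, ⟪x - z, a i⟫ ^ 2 ≤ ‖x - z‖ ^ 2 * pDim E p :=
    hdim ▸ sum_sq_inner_le _ _ _
  have hsum := Finset.sum_le_sum fun i (_ : i ∈ Finset.univ) =>
    inner_fderiv_hessian_add_norm_sq_le_of_isLocalMax_bernsteinFun hk hu hx hφ hmax (a i)
  simp only [Finset.sum_add_distrib, ← Finset.mul_sum, ← Finset.sum_div, ← ha, hdim] at hsum
  calc
    _ ≤ k * ((pDim E p * pTrace p (∇ u x) (fderiv ℝ (hessian u) x (∇ u x)) +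
          pDim E p * ∑ i, ‖hessian u x (a i)‖ ^ 2) / ‖∇ u x‖ ^ 2) := by gcongr
    _ = pDim E p * (k * ((pTrace p (∇ u x) (fderiv ℝ (hessian u) x (∇ u x)) +
          ∑ i, ‖hessian u x (a i)‖ ^ 2) / ‖∇ u x‖ ^ 2)) := by ring
    _ ≤ pDim E p * (2 / (R ^ 2 - ‖x - z‖ ^ 2) * pDim E p +
          4 * (1 + 2 / k) / (R ^ 2 - ‖x - z‖ ^ 2) ^ 2 * (‖x - z‖ ^ 2 * pDim E p)) := by
        refine mul_le_mul_of_nonneg_left (hsum.trans ?_) hdim_nonneg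
        gcongr
    _ = _ := by ring

theorem neg_le_pTrace_fderiv_hessian_of_isLocalMax_bernsteinFun (hk : 0 < k) (hR : 0 ≤ R)
    (hu : ContDiffAt ℝ 3 u x) (hx : ∇ u x ≠ 0) (hφ : 0 < R ^ 2 - ‖x - z‖ ^ 2)
    (hmax : IsLocalMax (bernsteinFun u k R z) x)
    (heq : ∀ᶠ y in 𝓝 x, pTrace p (∇ u y) (hessian u y) = ‖∇ u y‖ ^ (k + 1)) :
    -(2 * (k + 1) * R * bernsteinFun u k R z x + 8 * |p - 2| / k * R ^ 2) ≤
      k * (pTrace p (∇ u x) (fderiv ℝ (hessian u) x (∇ u x)) / ‖∇ u x‖ ^ 2) *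
        (R ^ 2 - ‖x - z‖ ^ 2) ^ 2 := by
  have hw : 0 < ‖∇ u x‖ := norm_pos_iff.2 hx
  have hy : ‖x - z‖ ≤ R := (sq_le_sq₀ (norm_nonneg _) hR).1 (sub_pos.1 hφ).le
  have hpow : ‖∇ u x‖ ^ (k + 1 - 2) = ‖∇ u x‖ ^ k / ‖∇ u x‖ := by
    rw [← Real.rpow_sub_one hw.ne']
    ring_nf
  have hc : |⟪x - z, ∇ u x⟫ / ‖∇ u x‖| ≤ ‖x - z‖ := by
    rw [abs_div, abs_norm, div_le_iff₀ hw]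
    exact abs_real_inner_le_norm _ _
  rw [pTrace_fderiv_hessian_of_eventuallyEq hu hx heq,
    hessian_gradient_of_isLocalMax_bernsteinFun hk hu hx hφ hmax, real_inner_smul_left,
    norm_smul, mul_pow, Real.norm_eq_abs, sq_abs, hpow, bernsteinFun]
  set w := ‖∇ u x‖
  set φ := R ^ 2 - ‖x - z‖ ^ 2
  set c := ⟪x - z, ∇ u x⟫
  have hlin : 2 * (k + 1) * (w ^ k * φ) * -R ≤ 2 * (k + 1) * (w ^ k * φ) * (c / w) := by
    gcongr
    exact neg_le_of_abs_le (hc.trans hy)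
  have hdefect : (p - 2) * (‖x - z‖ ^ 2 - (c / w) ^ 2) ≤ |p - 2| * R ^ 2 :=
    mul_le_mul (le_abs_self _)
      ((sub_le_self _ (sq_nonneg _)).trans (pow_le_pow_left₀ (norm_nonneg _) hy 2))
      (sub_nonneg.2 (sq_le_sq' (neg_le_of_abs_le hc) (le_of_abs_le hc))) (abs_nonneg _)
  calc
    _ = 2 * (k + 1) * (w ^ k * φ) * -R - 8 / k * (|p - 2| * R ^ 2) := by ring
    _ ≤ 2 * (k + 1) * (w ^ k * φ) * (c / w) -
          8 / k * ((p - 2) * (‖x - z‖ ^ 2 - (c / w) ^ 2)) := by gcongr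
    _ = _ := by
        field_simp
        ring

/-- The constant of the interior estimate `IsNoncriticalSolution.norm_gradient_rpow_mul_le`, with
`M` in the role of `pDim E p`; its shape comes from `le_max_one_mul_of_quadratic_le`. -/
noncomputable def bernsteinConst (M p k : ℝ) : ℝ :=
  max 1 ((2 * M * (k + 1) + M * (8 * |p - 2| / k + M * (6 + 8 / k))) / k)

theorem bernsteinFun_le_of_isLocalMax (hp : 1 ≤ p) (hk : 0 < k) (hR : 0 < R)
    (hu : ContDiffAt ℝ 3 u x) (hx : ∇ u x ≠ 0) (hφ : 0 < R ^ 2 - ‖x - z‖ ^ 2)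
    (hmax : IsLocalMax (bernsteinFun u k R z) x)
    (heq : ∀ᶠ y in 𝓝 x, pTrace p (∇ u y) (hessian u y) = ‖∇ u y‖ ^ (k + 1)) :
    bernsteinFun u k R z x ≤ bernsteinConst (pDim E p) p k * R := by
  have : Nontrivial E := ⟨_, _, hx⟩
  have hM : 0 ≤ pDim E p := pDim_nonneg hp
  have hw : 0 < ‖∇ u x‖ := norm_pos_iff.2 hx
  have hupper := pTrace_fderiv_hessian_add_pTrace_hessian_sq_le_of_isLocalMax_bernsteinFun
    hp hk hu hx hφ hmax
  have hlower := neg_le_pTrace_fderiv_hessian_of_isLocalMax_bernsteinFun hk hR.le hu hx hφ hmax heq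
  refine le_max_one_mul_of_quadratic_le hk (by positivity) hR ?_
  set M := pDim E p
  set φ := R ^ 2 - ‖x - z‖ ^ 2 with hφ_def
  set Y := bernsteinFun u k R z x with hY
  set D := pTrace p (∇ u x) (fderiv ℝ (hessian u) x (∇ u x))
  have hgood : (pTrace p (∇ u x) (hessian u x)) ^ 2 / ‖∇ u x‖ ^ 2 * φ ^ 2 = Y ^ 2 := by
    rw [heq.self_of_nhds, Real.rpow_add_one hw.ne', hY, bernsteinFun, ← hφ_def]
    field_simp
  have hradial : 2 * φ + 4 * (1 + 2 / k) * ‖x - z‖ ^ 2 ≤ (6 + 8 / k) * R ^ 2 := by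
    have hdiff : (6 + 8 / k) * R ^ 2 - (2 * φ + 4 * (1 + 2 / k) * ‖x - z‖ ^ 2) =
      (4 + 8 / k) * φ + 2 * ‖x - z‖ ^ 2 := by rw [hφ_def]; ring
    exact sub_nonneg.1 (hdiff ▸ by positivity)
  have hupper_mul : k * Y ^ 2 + M * (k * (D / ‖∇ u x‖ ^ 2) * φ ^ 2) ≤
      M ^ 2 * (2 * φ + 4 * (1 + 2 / k) * ‖x - z‖ ^ 2) := by
    rw [← hgood]
    refine le_of_eq_of_le ?_ ((mul_le_mul_of_nonneg_right hupper (sq_nonneg φ)).trans_eq ?_)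
    · ring
    · field_simp
  linarith [mul_le_mul_of_nonneg_left hlower hM,
    mul_le_mul_of_nonneg_left hradial (sq_nonneg M)]

end BernsteinBound

section Equation

variable {E : Type*} [NormedAddCommGroup E] [InnerProductSpace ℝ E] [FiniteDimensional ℝ E]

/-- A `C¹` function on `G` that is `C³` and solves `-Δ_p u + |∇u|^q = 0` off its critical points.
Nothing is asked of the equation at the critical points. -/
structure IsNoncriticalSolution (p q : ℝ) (G : Set E) (u : E → ℝ) : Prop where
  contDiffOn : ContDiffOn ℝ 1 u G
  contDiffOn_noncritical : ContDiffOn ℝ 3 u {x | x ∈ G ∧ ∇ u x ≠ 0}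
  divergence_eq : ∀ x ∈ G, ∇ u x ≠ 0 →
    divergence (fun y => ‖∇ u y‖ ^ (p - 2) • ∇ u y) x = ‖∇ u x‖ ^ q

theorem IsStrongSolution.isNoncriticalSolution {N : ℕ} {p q : ℝ}
    {G : Set (EuclideanSpace ℝ (Fin N))} {u : EuclideanSpace ℝ (Fin N) → ℝ}
    (hu : IsStrongSolution p q G u) : IsNoncriticalSolution p q G u :=
  ⟨hu.1, hu.2.1, fun x hx _ => (hu.2.2 x hx).2⟩

variable {p q k R : ℝ} {G : Set E} {u : E → ℝ} {x z : E}

theorem IsNoncriticalSolution.eventually_contDiffAt (hu : IsNoncriticalSolution p q G u)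
    (hG : IsOpen G) (hxG : x ∈ G) (hx : ∇ u x ≠ 0) :
    ∀ᶠ y in 𝓝 x, y ∈ G ∧ ∇ u y ≠ 0 ∧ ContDiffAt ℝ 3 u y := by
  have hopen : IsOpen {y | y ∈ G ∧ ∇ u y ≠ 0} :=
    (continuousOn_gradient hu.contDiffOn hG).isOpen_inter_preimage hG isOpen_compl_singleton
  filter_upwards [hopen.mem_nhds ⟨hxG, hx⟩] with y hy using
    ⟨hy.1, hy.2, hu.contDiffOn_noncritical.contDiffAt (hopen.mem_nhds hy)⟩

theorem IsNoncriticalSolution.pTrace_eq (hu : IsNoncriticalSolution p q G u) (hxG : x ∈ G)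
    (hx : ∇ u x ≠ 0) (hcd : ContDiffAt ℝ 2 u x) :
    pTrace p (∇ u x) (hessian u x) = ‖∇ u x‖ ^ (q + 1 - p + 1) := by
  have hw : 0 < ‖∇ u x‖ := norm_pos_iff.2 hx
  have hdiv := hu.divergence_eq x hxG hx
  rw [divergence_norm_rpow_smul (hasFDerivAt_gradient hcd) hx] at hdiv
  refine mul_left_cancel₀ (Real.rpow_pos_of_pos hw (p - 2)).ne' (hdiv.trans ?_)
  rw [← Real.rpow_add hw]
  ring_nf

theorem exists_isLocalMax_bernsteinFun (hu : ContinuousOn (∇ u) (closedBall z R)) (hk : 0 < k)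
    (hR : 0 < R) (hz : ∇ u z ≠ 0) :
    ∃ x, 0 < R ^ 2 - ‖x - z‖ ^ 2 ∧ ∇ u x ≠ 0 ∧ IsLocalMax (bernsteinFun u k R z) x ∧
      bernsteinFun u k R z z ≤ bernsteinFun u k R z x := by
  have hcont : ContinuousOn (bernsteinFun u k R z) (closedBall z R) :=
    (hu.norm.rpow_const fun _ _ => Or.inr hk.le).mul (by fun_prop)
  obtain ⟨x, -, hmax⟩ := (isCompact_closedBall z R).exists_isMaxOn
    ⟨z, mem_closedBall_self hR.le⟩ hcont
  have hzx : bernsteinFun u k R z z ≤ bernsteinFun u k R z x := hmax (mem_closedBall_self hR.le)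
  have hpos : 0 < bernsteinFun u k R z x := by
    refine lt_of_lt_of_le ?_ hzx
    rw [bernsteinFun, sub_self, norm_zero, zero_pow two_ne_zero, sub_zero]
    positivity
  have hφ : 0 < R ^ 2 - ‖x - z‖ ^ 2 := pos_of_mul_pos_right hpos (by positivity)
  have hx : ∇ u x ≠ 0 := fun h => hpos.ne' (by simp [bernsteinFun, h, Real.zero_rpow hk.ne'])
  have hball : x ∈ ball z R :=
    mem_ball_iff_norm.2 ((sq_lt_sq₀ (norm_nonneg _) hR.le).1 (sub_pos.1 hφ))
  exact ⟨x, hφ, hx,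
    hmax.isLocalMax (mem_of_superset (isOpen_ball.mem_nhds hball) ball_subset_closedBall), hzx⟩

theorem IsNoncriticalSolution.norm_gradient_rpow_mul_le (hu : IsNoncriticalSolution p q G u)
    (hp : 1 ≤ p) (hq : p - 1 < q) (hG : IsOpen G) (hR : 0 < R) (hball : closedBall z R ⊆ G) :
    ‖∇ u z‖ ^ (q + 1 - p) * R ≤ bernsteinConst (pDim E p) p (q + 1 - p) := by
  have hk : 0 < q + 1 - p := by linarith
  rcases eq_or_ne (∇ u z) 0 with hz | hz
  · rw [hz, norm_zero, Real.zero_rpow hk.ne', zero_mul]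
    exact zero_le_one.trans (le_max_left _ _)
  obtain ⟨x, hφ, hx, hmax, hzx⟩ := exists_isLocalMax_bernsteinFun
    ((continuousOn_gradient hu.contDiffOn hG).mono hball) hk hR hz
  have hxG : x ∈ G := hball <| mem_closedBall_iff_norm.2 <|
    (sq_le_sq₀ (norm_nonneg _) hR.le).1 (sub_pos.1 hφ).le
  have hnear := hu.eventually_contDiffAt hG hxG hx
  have hbound := bernsteinFun_le_of_isLocalMax hp hk hR hnear.self_of_nhds.2.2 hx hφ hmax
    (hnear.mono fun y hy => hu.pTrace_eq hy.1 hy.2.1 (hy.2.2.of_le (by norm_num)))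
  have hcentre : bernsteinFun u (q + 1 - p) R z z = ‖∇ u z‖ ^ (q + 1 - p) * R * R := by
    rw [bernsteinFun, sub_self, norm_zero]
    ring
  exact le_of_mul_le_mul_right (hcentre ▸ hzx.trans hbound) hR

theorem gradient_estimate_general (E : Type*) [NormedAddCommGroup E] [InnerProductSpace ℝ E]
    [FiniteDimensional ℝ E] {p q : ℝ} (hp : 1 ≤ p) (hq : p - 1 < q) :
    ∃ c : ℝ, 0 < c ∧ ∀ Ω : Set E, IsOpen Ω → Ω ≠ univ → ∀ u : E → ℝ,
      IsNoncriticalSolution p q Ω u →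
        ∀ x ∈ Ω, ‖∇ u x‖ ≤ c * infDist x Ωᶜ ^ (-(1 / (q + 1 - p))) := by
  let C := bernsteinConst (pDim E p) p (q + 1 - p)
  have hC : 0 < C := zero_lt_one.trans_le (le_max_left _ _)
  refine ⟨(2 * C) ^ (1 / (q + 1 - p)), by positivity, fun Ω hΩ hne u hu x hx => ?_⟩
  have hd : 0 < infDist x Ωᶜ :=
    (hΩ.isClosed_compl.notMem_iff_infDist_pos (nonempty_compl.2 hne)).1 (notMem_compl_iff.2 hx)
  have hball : closedBall x (infDist x Ωᶜ / 2) ⊆ Ω :=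
    (closedBall_subset_ball (half_lt_self hd)).trans ball_infDist_compl_subset
  have hbound : ‖∇ u x‖ ^ (q + 1 - p) * (infDist x Ωᶜ / 2) ≤ C :=
    hu.norm_gradient_rpow_mul_le hp hq hΩ (half_pos hd) hball
  exact le_mul_rpow_of_rpow_mul_le (norm_nonneg _) hd (by linarith) (by positivity) (by linarith)

end Equation

/-- Universal gradient estimate for solutions of (E). -/
theorem gradient_estimate (N : ℕ) (hN : 2 ≤ N) (p q : ℝ) (hp : 1 < p) (hq : p - 1 < q) :
    ∃ c : ℝ, 0 < c ∧
      ∀ Ω : Set (EuclideanSpace ℝ (Fin N)), IsOpen Ω → Ω.Nonempty → Ω ≠ univ →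
        ∀ u : EuclideanSpace ℝ (Fin N) → ℝ, IsStrongSolution p q Ω u →
          ∀ x ∈ Ω, ‖gradient u x‖ ≤ c * Metric.infDist x Ωᶜ ^ (-(1 / (q + 1 - p))) := by
  obtain ⟨c, hc, h⟩ := gradient_estimate_general (EuclideanSpace ℝ (Fin N)) hp.le hq
  exact ⟨c, hc, fun Ω hΩ _ hne u hu => h Ω hΩ hne u hu.isNoncriticalSolution⟩
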